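/- For every integer n ≥ 1, the maximum of tr(ψ_{A^n}²) over all unit vectors ψ in the range of (P_2^{(3)})^{⊗n} ⊆ (ℂ³ ⊗ ℂ³)^{⊗n} equals 2^{−n}, where ψ_{A^n} := tr_{B^n} |ψ⟩⟨ψ| is obtained by tracing out the n second tensor factors. That is, tr(ψ_{A^n}²) ≤ 2^{−n} for all such unit vectors ψ, and there exists a unit vector ψ in the range of (P_2^{(3)})^{⊗n} achieving equality. -/

import Mathlib

open scoped BigOperators
open Classical
open scoped ComplexOrder

noncomputable section

/-- Partial trace over the second tensor factor:
`(ptraceSnd M) a a' = ∑ b, M (a,b) (a',b)`. -/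
def ptraceSnd {α β : Type*} [Fintype β] (M : Matrix (α × β) (α × β) ℂ) : Matrix α α ℂ :=
  Matrix.of fun a a' => ∑ b : β, M (a, b) (a', b)

/-- Von Neumann entropy (in bits) of a matrix, via the eigenvalues of a Hermitian matrix
(with the convention `0 * log₂ 0 = 0`, automatic since `Real.logb 2 0 = 0`). -/
def vnEntropy {ι : Type*} [Fintype ι] [DecidableEq ι] (ρ : Matrix ι ι ℂ) : ℝ :=
  if h : ρ.IsHermitian then -∑ i, h.eigenvalues i * Real.logb 2 (h.eigenvalues i) else 0

/-- Entanglement of formation of a bipartite (density) matrix: the infimum of the average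
entropy of entanglement over all finite pure-state ensembles for `ρ`. -/
def EoF {α β : Type*} [Fintype α] [DecidableEq α] [Fintype β] [DecidableEq β]
    (ρ : Matrix (α × β) (α × β) ℂ) : ℝ :=
  sInf {E : ℝ | ∃ (k : ℕ) (p : Fin k → ℝ) (ψ : Fin k → (α × β → ℂ)),
    (∀ i, 0 ≤ p i) ∧ (∑ i, p i = 1) ∧
    (∀ i, ∑ x, Complex.normSq (ψ i x) = 1) ∧
    (∑ i, p i • Matrix.vecMulVec (ψ i) (star (ψ i)) = ρ) ∧
    E = ∑ i, p i * vnEntropy (ptraceSnd (Matrix.vecMulVec (ψ i) (star (ψ i))))}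

/-- The antisymmetric projector `P₂^{(d)} = (1/2)(𝟙 - F)` on `ℂ^d ⊗ ℂ^d`. -/
def asymProj (d : ℕ) : Matrix (Fin d × Fin d) (Fin d × Fin d) ℂ :=
  Matrix.of fun p q => (1 / 2 : ℂ) *
    ((if p.1 = q.1 ∧ p.2 = q.2 then 1 else 0) - (if p.1 = q.2 ∧ p.2 = q.1 then 1 else 0))

/-- The antisymmetric state `α_d = P₂^{(d)} / binom(d,2)`. -/
def antisymState (d : ℕ) : Matrix (Fin d × Fin d) (Fin d × Fin d) ℂ :=
  (1 / (Nat.choose d 2 : ℂ)) • asymProj d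

/-- `α_d^{⊗n}`, viewed as a bipartite state on `((ℂ^d)^{⊗n})_A ⊗ ((ℂ^d)^{⊗n})_B`
(the `n` first tensor factors grouped on the `A` side, the `n` second ones on the `B` side). -/
def alphaPow (d n : ℕ) :
    Matrix ((Fin n → Fin d) × (Fin n → Fin d)) ((Fin n → Fin d) × (Fin n → Fin d)) ℂ :=
  Matrix.of fun p q => ∏ i : Fin n, antisymState d (p.1 i, p.2 i) (q.1 i, q.2 i)

/-- `(P₂^{(d)})^{⊗n}`, viewed as an operator on `((ℂ^d)^{⊗n})_A ⊗ ((ℂ^d)^{⊗n})_B`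
(the `n` first tensor factors grouped on the `A` side, the `n` second ones on the `B` side). -/
def asymPow (d n : ℕ) :
    Matrix ((Fin n → Fin d) × (Fin n → Fin d)) ((Fin n → Fin d) × (Fin n → Fin d)) ℂ :=
  Matrix.of fun p q => ∏ i : Fin n, asymProj d (p.1 i, p.2 i) (q.1 i, q.2 i)

/-- The antisymmetrizer `P_k^{(d)} = (1/k!) ∑_{σ ∈ S_k} sgn(σ) U_σ` on `(ℂ^d)^{⊗k}`. -/
def asymProjK (d k : ℕ) : Matrix (Fin k → Fin d) (Fin k → Fin d) ℂ :=
  Matrix.of fun f g => (1 / (Nat.factorial k) : ℂ) *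
    ∑ σ : Equiv.Perm (Fin k), ((Equiv.Perm.sign σ : ℤ) : ℂ) * (if f = g ∘ σ then 1 else 0)

/-- Quantum conditional mutual information `I(A;B|E) = H(AE) + H(BE) - H(ABE) - H(E)`
(in bits) of a tripartite (density) matrix. -/
def condMutInfo {α β γ : Type*} [Fintype α] [DecidableEq α] [Fintype β] [DecidableEq β]
    [Fintype γ] [DecidableEq γ] (ρ : Matrix ((α × β) × γ) ((α × β) × γ) ℂ) : ℝ :=
  vnEntropy (Matrix.of fun p q : α × γ => ∑ b : β, ρ ((p.1, b), p.2) ((q.1, b), q.2))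
  + vnEntropy (Matrix.of fun p q : β × γ => ∑ a : α, ρ ((a, p.1), p.2) ((a, q.1), q.2))
  - vnEntropy ρ
  - vnEntropy (Matrix.of fun e e' : γ => ∑ a : α, ∑ b : β, ρ ((a, b), e) ((a, b), e'))

/-- Squashed entanglement: `E_sq(ρ_AB) = inf (1/2) I(A;B|E)` over all finite-dimensional
extensions `ρ_ABE` of `ρ_AB`. -/
def Esq {α β : Type*} [Fintype α] [DecidableEq α] [Fintype β] [DecidableEq β]
    (ρ : Matrix (α × β) (α × β) ℂ) : ℝ :=
  sInf {x : ℝ | ∃ (m : ℕ) (σ : Matrix ((α × β) × Fin m) ((α × β) × Fin m) ℂ),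
    σ.PosSemidef ∧ σ.trace = 1 ∧ ptraceSnd σ = ρ ∧ x = (1 / 2) * condMutInfo σ}

/-- The operator norm `‖·‖_∞` of a matrix, acting on Euclidean space. -/
def opNorm {ι : Type*} [Fintype ι] [DecidableEq ι] (M : Matrix ι ι ℂ) : ℝ :=
  ‖Matrix.toEuclideanCLM (𝕜 := ℂ) M‖

/-- A bipartite (density) matrix is separable if it is a finite convex combination of
product density matrices. -/
def IsSeparableMat {α β : Type*} [Fintype α] [Fintype β]
    (σ : Matrix (α × β) (α × β) ℂ) : Prop :=
  ∃ (k : ℕ) (p : Fin k → ℝ) (ρA : Fin k → Matrix α α ℂ) (ρB : Fin k → Matrix β β ℂ),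
    (∀ i, 0 ≤ p i) ∧ (∑ i, p i = 1) ∧
    (∀ i, (ρA i).PosSemidef) ∧ (∀ i, (ρA i).trace = 1) ∧
    (∀ i, (ρB i).PosSemidef) ∧ (∀ i, (ρB i).trace = 1) ∧
    σ = ∑ i, p i • Matrix.kroneckerMap (· * ·) (ρA i) (ρB i)

/-- Levi-Civita symbol on `Fin 3`. -/
def lc (a b k : Fin 3) : ℤ :=
  if b = a + 1 ∧ k = a + 2 then 1 else if a = b + 1 ∧ k = b + 2 then -1 else 0

def dl (a b : Fin 3) : ℤ := if a = b then 1 else 0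

lemma lc_proj (a b a' b' : Fin 3) :
    ∑ k, lc a b k * lc a' b' k = dl a a' * dl b b' - dl a b' * dl b a' := by
  revert a b a' b'; decide +kernel

lemma lc_norm (k l : Fin 3) : ∑ a, ∑ b, lc a b k * lc a b l = 2 * dl k l := by
  revert k l; decide +kernel

lemma lc_contr (a a' k l : Fin 3) :
    ∑ b, lc a b k * lc a' b l = dl a a' * dl k l - dl a l * dl k a' := by
  revert a a' k l; decide +kernel

lemma lc_W (k l k' l' : Fin 3) :
    ∑ a, ∑ a', (dl a a' * dl k l - dl a l * dl k a') * (dl a' a * dl k' l' - dl a' l' * dl k' a)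
      = dl k l * dl k' l' + dl k l' * dl k' l := by
  revert k l k' l'; decide +kernel

section
variable {n : ℕ}

def EE (a b k : Fin n → Fin 3) : ℂ := ((∏ i, lc (a i) (b i) (k i) : ℤ) : ℂ)

def vec (c : (Fin n → Fin 3) → ℂ) : (Fin n → Fin 3) × (Fin n → Fin 3) → ℂ :=
  fun p => ∑ k, EE p.1 p.2 k * c k

lemma asymPow_eq (a b a' b' : Fin n → Fin 3) :
    asymPow 3 n (a, b) (a', b') = (1 / 2 : ℂ) ^ n * ∑ k, EE a b k * EE a' b' k := by
  have h : ∑ k : Fin n → Fin 3, EE a b k * EE a' b' k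
      = ((∏ i, ∑ k, lc (a i) (b i) k * lc (a' i) (b' i) k : ℤ) : ℂ) := by
    rw [Fintype.prod_sum]
    simp only [EE]
    push_cast
    simp only [Finset.prod_mul_distrib]
  rw [h]
  simp only [lc_proj]
  push_cast
  have h2 : (1 / 2 : ℂ) ^ n = ∏ i : Fin n, (1 / 2 : ℂ) := by simp
  rw [h2, ← Finset.prod_mul_distrib]
  simp only [asymPow, asymProj, Matrix.of_apply]
  refine Finset.prod_congr rfl fun i _ => ?_
  simp only [dl, ite_and]
  push_cast
  congr 1
  simp only [mul_ite, mul_one, mul_zero]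
  split_ifs <;> rfl

lemma EE_norm (k l : Fin n → Fin 3) :
    ∑ a, ∑ b, EE a b k * EE a b l = if k = l then (2 : ℂ) ^ n else 0 := by
  have h : ∑ a, ∑ b, EE a b k * EE a b l
      = ((∏ i, ∑ a, ∑ b, lc a b (k i) * lc a b (l i) : ℤ) : ℂ) := by
    simp only [Fintype.prod_sum]
    simp only [EE]
    push_cast
    simp only [Finset.prod_mul_distrib]
  rw [h]
  simp only [lc_norm]
  split_ifs with hkl
  · subst hkl; simp [dl]
  · obtain ⟨i, hi⟩ := Function.ne_iff.mp hkl
    rw [Finset.prod_eq_zero (Finset.mem_univ i)]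
    · simp
    · simp [dl, hi]

lemma star_EE (a b k : Fin n → Fin 3) : star (EE a b k) = EE a b k := by
  simp [EE]

/-- adjoint -/
def adj (ψ : (Fin n → Fin 3) × (Fin n → Fin 3) → ℂ) : (Fin n → Fin 3) → ℂ :=
  fun k => ∑ p : (Fin n → Fin 3) × (Fin n → Fin 3), EE p.1 p.2 k * ψ p

lemma asymPow_mulVec (ψ : (Fin n → Fin 3) × (Fin n → Fin 3) → ℂ) :
    (asymPow 3 n).mulVec ψ = vec (fun k => (1 / 2 : ℂ) ^ n * adj ψ k) := by
  funext p
  obtain ⟨a, b⟩ := p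
  simp only [Matrix.mulVec, dotProduct, vec, adj, Finset.mul_sum]
  rw [Finset.sum_comm]
  refine Finset.sum_congr rfl fun q _ => ?_
  obtain ⟨a', b'⟩ := q
  rw [asymPow_eq, Finset.mul_sum, Finset.sum_mul]
  refine Finset.sum_congr rfl fun k _ => ?_
  ring

lemma adj_vec (c : (Fin n → Fin 3) → ℂ) : adj (vec c) = fun k => (2 : ℂ) ^ n * c k := by
  funext k
  simp only [adj, vec, Finset.mul_sum]
  rw [Finset.sum_comm]
  have : ∀ l, ∑ p : (Fin n → Fin 3) × (Fin n → Fin 3), EE p.1 p.2 k * (EE p.1 p.2 l * c l)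
      = (if k = l then (2 : ℂ) ^ n else 0) * c l := by
    intro l
    rw [← EE_norm, ← Fintype.sum_prod_type' (fun a b => EE a b k * EE a b l), Finset.sum_mul]
    refine Finset.sum_congr rfl fun p _ => ?_
    ring
  simp only [this]
  simp

lemma norm_vec (c : (Fin n → Fin 3) → ℂ) :
    ∑ v, Complex.normSq (vec c v) = 2 ^ n * ∑ k, Complex.normSq (c k) := by
  have h : ∑ v, star (vec c v) * vec c v = ∑ k, star (c k) * adj (vec c) k := by
    simp only [adj, Finset.mul_sum]
    rw [Finset.sum_comm]
    refine Finset.sum_congr rfl fun p _ => ?_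
    conv_lhs => rw [show star (vec c p) = ∑ k, EE p.1 p.2 k * star (c k) by
      simp only [vec, star_sum, star_mul', star_EE]]
    rw [Finset.sum_mul]
    refine Finset.sum_congr rfl fun k _ => ?_
    ring
  rw [adj_vec] at h
  have h3 : ∀ z : ℂ, star z * z = (Complex.normSq z : ℂ) := by
    intro z; rw [Complex.star_def, Complex.normSq_eq_conj_mul_self]
  have h2 : ∀ z : ℂ, star z * (2 ^ n * z) = 2 ^ n * (Complex.normSq z : ℂ) := by
    intro z; rw [← h3]; ring
  simp only [h2, h3] at h
  rw [← Finset.mul_sum] at h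
  exact_mod_cast h

def GG (a a' k l : Fin n → Fin 3) : ℂ :=
  ((∏ i, (dl (a i) (a' i) * dl (k i) (l i) - dl (a i) (l i) * dl (k i) (a' i)) : ℤ) : ℂ)

lemma GG_eq (a a' k l : Fin n → Fin 3) : ∑ b, EE a b k * EE a' b l = GG a a' k l := by
  simp only [GG, ← lc_contr]
  simp only [Fintype.prod_sum, EE]
  push_cast
  simp only [Finset.prod_mul_distrib]

lemma mix_eq (S : Finset (Fin n)) (k l k' l' : Fin n → Fin 3) :
    ((∏ i ∈ S, (dl (k i) (l i) * dl (k' i) (l' i))) *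
      ∏ i ∈ Finset.univ \ S, (dl (k i) (l' i) * dl (k' i) (l i)))
    = if l = S.piecewise k k' ∧ l' = S.piecewise k' k then 1 else 0 := by
  split_ifs with h
  · obtain ⟨rfl, rfl⟩ := h
    rw [Finset.prod_eq_one, Finset.prod_eq_one, one_mul]
    · intro i hi
      have : i ∉ S := by simpa using hi
      simp [dl, this]
    · intro i hi
      simp [dl, hi]
  · by_contra hne
    apply h
    have h1 := Finset.prod_ne_zero_iff.mp (left_ne_zero_of_mul hne)
    have h2 := Finset.prod_ne_zero_iff.mp (right_ne_zero_of_mul hne)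
    simp only [dl] at h1 h2
    constructor <;> funext i <;> by_cases hi : i ∈ S
    · have := h1 i hi; simp at this; simp [hi, this]
    · have := h2 i (by simpa using hi); simp at this; simp [hi, this]
    · have := h1 i hi; simp at this; simp [hi, this]
    · have := h2 i (by simpa using hi); simp at this; simp [hi, this]

lemma GG_W (k l k' l' : Fin n → Fin 3) :
    ∑ a, ∑ a', GG a a' k l * GG a' a k' l'
      = ∑ S : Finset (Fin n),
        if l = S.piecewise k k' ∧ l' = S.piecewise k' k then (1 : ℂ) else 0 := by
  have h : ∑ a, ∑ a', GG a a' k l * GG a' a k' l'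
      = ((∏ i, (dl (k i) (l i) * dl (k' i) (l' i) + dl (k i) (l' i) * dl (k' i) (l i)) : ℤ) : ℂ) := by
    simp only [← lc_W]
    simp only [Fintype.prod_sum, GG]
    push_cast
    simp only [Finset.prod_mul_distrib]
  rw [h, Finset.prod_add]
  simp only [mix_eq]
  push_cast
  simp

lemma rho_eq (c : (Fin n → Fin 3) → ℂ) (a a' : Fin n → Fin 3) :
    ptraceSnd (Matrix.vecMulVec (vec c) (star (vec c))) a a'
      = ∑ k, ∑ l, c k * star (c l) * GG a a' k l := by
  simp only [ptraceSnd, Matrix.of_apply, Matrix.vecMulVec_apply, Pi.star_apply, vec, star_sum,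
    star_mul', star_EE, Finset.sum_mul_sum]
  simp only [← GG_eq, Finset.mul_sum]
  rw [Finset.sum_comm]
  refine Finset.sum_congr rfl fun k _ => ?_
  rw [Finset.sum_comm]
  refine Finset.sum_congr rfl fun l _ => ?_
  refine Finset.sum_congr rfl fun b _ => ?_
  ring

lemma purity_eq (c : (Fin n → Fin 3) → ℂ) :
    Matrix.trace (ptraceSnd (Matrix.vecMulVec (vec c) (star (vec c))) *
          ptraceSnd (Matrix.vecMulVec (vec c) (star (vec c))))
    = ∑ S : Finset (Fin n), ∑ k, ∑ k', (c k * c k') *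
        star (c (S.piecewise k k') * c (S.piecewise k' k)) := by
  have h1 : Matrix.trace (ptraceSnd (Matrix.vecMulVec (vec c) (star (vec c))) *
          ptraceSnd (Matrix.vecMulVec (vec c) (star (vec c))))
      = ∑ k, ∑ k', ∑ l, ∑ l', (c k * star (c l)) * (c k' * star (c l')) *
        ∑ a, ∑ a', GG a a' k l * GG a' a k' l' := by
    let C : (Fin n → Fin 3) × (Fin n → Fin 3) → ℂ := fun q => c q.1 * star (c q.2)
    have hr : ∀ a a', ptraceSnd (Matrix.vecMulVec (vec c) (star (vec c))) a a'
        = ∑ q : (Fin n → Fin 3) × (Fin n → Fin 3), C q * GG a a' q.1 q.2 := by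
      intro a a'
      rw [rho_eq, Fintype.sum_prod_type]
    have hR : (∑ k, ∑ k', ∑ l, ∑ l', (c k * star (c l)) * (c k' * star (c l')) *
        ∑ a, ∑ a', GG a a' k l * GG a' a k' l')
        = ∑ q, ∑ q', C q * C q' * ∑ a, ∑ a', GG a a' q.1 q.2 * GG a' a q'.1 q'.2 := by
      simp only [Fintype.sum_prod_type, C]
      refine Finset.sum_congr rfl fun k _ => ?_
      rw [Finset.sum_comm]
    rw [hR]
    simp only [Matrix.trace, Matrix.diag, Matrix.mul_apply, hr, Finset.sum_mul_sum]
    simp only [← Fintype.sum_prod_type' (fun a a' : Fin n → Fin 3 => _)]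
    simp only [← Fintype.sum_prod_type' (fun a a' : (Fin n → Fin 3) × (Fin n → Fin 3) => _)]
    simp only [Finset.mul_sum]
    rw [Finset.sum_comm]
    refine Finset.sum_congr rfl fun q _ => Finset.sum_congr rfl fun r _ => ?_
    ring
  rw [h1]
  simp only [GG_W, Finset.mul_sum]
  have h2 : ∀ k k' : Fin n → Fin 3, (∑ l, ∑ l', ∑ S : Finset (Fin n),
      (c k * star (c l)) * (c k' * star (c l')) *
        (if l = S.piecewise k k' ∧ l' = S.piecewise k' k then (1 : ℂ) else 0))
      = ∑ S : Finset (Fin n), (c k * c k') *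
        star (c (S.piecewise k k') * c (S.piecewise k' k)) := by
    intro k k'
    rw [Finset.sum_congr rfl fun l _ => Finset.sum_comm, Finset.sum_comm]
    refine Finset.sum_congr rfl fun S _ => ?_
    rw [Finset.sum_eq_single (S.piecewise k k'), Finset.sum_eq_single (S.piecewise k' k)]
    · simp only [and_self, if_true, star_mul']; ring
    · intro l' _ hl; simp [hl]
    · simp
    · intro l _ hl; simp [hl]
    · simp
  simp only [h2]
  rw [Finset.sum_congr rfl fun l _ => Finset.sum_comm, Finset.sum_comm]

lemma re_le (z w : ℂ) : (z * star w).re ≤ (Complex.normSq z + Complex.normSq w) / 2 := by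
  simp only [Complex.normSq_apply, Complex.mul_re, Complex.star_def, Complex.conj_re,
    Complex.conj_im]
  nlinarith [sq_nonneg (z.re - w.re), sq_nonneg (z.im - w.im)]

lemma swap_invol (S : Finset (Fin n)) : Function.Involutive
    (fun p : (Fin n → Fin 3) × (Fin n → Fin 3) => (S.piecewise p.1 p.2, S.piecewise p.2 p.1)) := by
  rintro ⟨k, k'⟩
  ext i <;> by_cases hi : i ∈ S <;> simp [hi]

lemma term_le (c : (Fin n → Fin 3) → ℂ) (S : Finset (Fin n)) :
    (∑ k, ∑ k', (c k * c k') * star (c (S.piecewise k k') * c (S.piecewise k' k))).re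
      ≤ (∑ k, Complex.normSq (c k)) ^ 2 := by
  let F : (Fin n → Fin 3) × (Fin n → Fin 3) → ℂ := fun p => c p.1 * c p.2
  let τ := (swap_invol S).toPerm
  have h1 : (∑ k, ∑ k', (c k * c k') * star (c (S.piecewise k k') * c (S.piecewise k' k)))
      = ∑ p, F p * star (F (τ p)) := by
    rw [Fintype.sum_prod_type]; rfl
  have h2 : (∑ k, Complex.normSq (c k)) ^ 2 = ∑ p, Complex.normSq (F p) := by
    rw [sq, Finset.sum_mul_sum, Fintype.sum_prod_type]
    simp [F]
  have h3 : ∑ p, Complex.normSq (F (τ p)) = ∑ p, Complex.normSq (F p) :=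
    Equiv.sum_comp τ (fun p => Complex.normSq (F p))
  rw [h1, h2, Complex.re_sum]
  calc _ ≤ ∑ p, (Complex.normSq (F p) + Complex.normSq (F (τ p))) / 2 :=
        Finset.sum_le_sum fun p _ => re_le _ _
    _ = _ := by rw [← Finset.sum_div, Finset.sum_add_distrib, h3]; ring

end

/-- For every integer `n ≥ 1`, the maximum of `tr(ψ_{A^n}²)` over unit
vectors `ψ` in the range of `(P₂^{(3)})^{⊗n}` equals `2^{-n}`: every such `ψ` satisfies
`tr(ψ_{A^n}²) ≤ 2^{-n}`, and some such `ψ` attains equality. -/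
theorem purity_antisym_d3 (n : ℕ) (hn : 1 ≤ n) :
    (∀ ψ : (Fin n → Fin 3) × (Fin n → Fin 3) → ℂ,
      (∑ v, Complex.normSq (ψ v) = 1) → (asymPow 3 n).mulVec ψ = ψ →
      (Matrix.trace (ptraceSnd (Matrix.vecMulVec ψ (star ψ)) *
          ptraceSnd (Matrix.vecMulVec ψ (star ψ)))).re ≤ (1 / 2 : ℝ) ^ n) ∧
    (∃ ψ : (Fin n → Fin 3) × (Fin n → Fin 3) → ℂ,
      (∑ v, Complex.normSq (ψ v) = 1) ∧ (asymPow 3 n).mulVec ψ = ψ ∧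
      (Matrix.trace (ptraceSnd (Matrix.vecMulVec ψ (star ψ)) *
          ptraceSnd (Matrix.vecMulVec ψ (star ψ)))).re = (1 / 2 : ℝ) ^ n) := by
  have hcomb : ∀ c : (Fin n → Fin 3) → ℂ, ∑ v, Complex.normSq (vec c v) = 1 →
      ∑ k, Complex.normSq (c k) = (1 / 2 : ℝ) ^ n := by
    intro c hc
    rw [norm_vec] at hc
    have : (1 / 2 : ℝ) ^ n * 2 ^ n = 1 := by rw [← mul_pow]; norm_num
    linear_combination (1 / 2 : ℝ) ^ n * hc - (∑ k, Complex.normSq (c k)) * this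
  have hpow : (2 : ℝ) ^ n * ((1 / 2 : ℝ) ^ n) ^ 2 = (1 / 2 : ℝ) ^ n := by
    rw [sq, ← mul_assoc, ← mul_pow]; norm_num
  refine ⟨?_, ?_⟩
  · intro ψ hψ hP
    rw [asymPow_mulVec] at hP
    generalize (fun k => (1 / 2 : ℂ) ^ n * adj ψ k) = c at hP
    subst hP
    have hc := hcomb c hψ
    rw [purity_eq, Complex.re_sum]
    calc _ ≤ ∑ S : Finset (Fin n), (∑ k, Complex.normSq (c k)) ^ 2 :=
          Finset.sum_le_sum fun S _ => term_le c S
      _ = _ := by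
          rw [hc, Finset.sum_const]
          simp only [Finset.card_univ, Fintype.card_finset, Fintype.card_fin, nsmul_eq_mul]
          push_cast
          exact hpow
  · let r : ℝ := (Real.sqrt (1 / 2)) ^ n
    have hr : r * r = (1 / 2 : ℝ) ^ n := by
      simp only [r]
      rw [← mul_pow, Real.mul_self_sqrt (by norm_num)]
    let c : (Fin n → Fin 3) → ℂ := fun k => if k = 0 then (r : ℂ) else 0
    have hcn : ∑ k, Complex.normSq (c k) = (1 / 2 : ℝ) ^ n := by
      rw [Finset.sum_eq_single 0]
      · simp [c, Complex.normSq_ofReal, hr]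
      · intro k _ hk; simp [c, hk]
      · simp
    refine ⟨vec c, ?_, ?_, ?_⟩
    · rw [norm_vec, hcn, ← mul_pow]; norm_num
    · rw [asymPow_mulVec, adj_vec]
      congr 1
      funext k
      rw [← mul_assoc, ← mul_pow]; norm_num
    · rw [purity_eq]
      have ht : ∀ S : Finset (Fin n), (∑ k, ∑ k', (c k * c k') *
          star (c (S.piecewise k k') * c (S.piecewise k' k))) = (((r * r) ^ 2 : ℝ) : ℂ) := by
        intro S
        rw [Finset.sum_eq_single 0, Finset.sum_eq_single 0]
        · have h0 : S.piecewise (0 : Fin n → Fin 3) 0 = 0 := by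
            funext i; by_cases hi : i ∈ S <;> simp [hi]
          rw [h0]
          simp [c]
          ring
        · intro k _ hk; simp [c, hk]
        · simp
        · intro k _ hk; simp [c, hk]
        · simp
      simp only [ht]
      rw [Finset.sum_const, hr]
      simp only [Finset.card_univ, Fintype.card_finset, Fintype.card_fin, nsmul_eq_mul]
      refine Eq.trans ?_ hpow
      norm_cast

end
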